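/- arXiv:1603.06269 — 2 statements merged into one kernel-verified Lean document; each statement's English description precedes it below -/
import Mathlib

section
/- Let K be a number field with r1 ≥ 1 real places and r2 complex places, and let O be an order in K. Let O^×_{≫0} be the subgroup of units of O that are totally positive, let (O^×)² = {u² : u ∈ O^×}, and let sgn : O^× → {±1}^{r1} be the homomorphism sending a unit u to the tuple of signs of φ(u) over all real embeddings φ : K → ℝ. Then #(O^×_{≫0}/(O^×)²) · #(Image(sgn)) = 2^{r1+r2}. -/
set_option synthInstance.maxHeartbeats 1000000
set_option maxHeartbeats 1000000
open NumberField

variable (K : Type) [Field K] [NumberField K] (O : Subring K) [IsFractionRing O K]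

/-- The subgroup `O^×_{≫0}` of totally positive units of an order `O` in a number field `K`. -/
noncomputable def totPosUnitsOrd : Subgroup Oˣ where
  carrier := {u | ∀ φ : K →+* ℝ, 0 < φ (algebraMap O K (u : O))}
  one_mem' := by
    intro φ
    rw [Units.val_one, _root_.map_one, _root_.map_one]
    exact one_pos
  mul_mem' := by
    intro a b ha hb φ
    rw [Units.val_mul, _root_.map_mul, _root_.map_mul]
    exact mul_pos (ha φ) (hb φ)
  inv_mem' := by
    intro a ha φ
    have h1 : φ (algebraMap O K ((a : Oˣ) : O)) * φ (algebraMap O K ((a⁻¹ : Oˣ) : O)) = 1 := by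
      rw [← _root_.map_mul, ← _root_.map_mul, ← Units.val_mul, mul_inv_cancel,
        Units.val_one, _root_.map_one, _root_.map_one]
    have h2 : φ (algebraMap O K ((a⁻¹ : Oˣ) : O)) = (φ (algebraMap O K ((a : Oˣ) : O)))⁻¹ :=
      eq_inv_of_mul_eq_one_right h1
    rw [h2]
    exact inv_pos.mpr (ha φ)

/-!
The sign map induces a bijection from `O^×/O^×_{≫0}` onto its image, so the product is the index
`[O^× : (O^×)²]`. In a finitely generated abelian group `A`, the index of `nA` is the order of the
`n`-torsion times `n ^ rank A`; for `A = O^×` and `n = 2` the `2`-torsion is `{±1}`. Finally `O^×`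
has the same rank `r1 + r2 - 1` as the units of the maximal order `𝓞_K`: if `m = [𝓞_K : O]`, then
`m𝓞_K ⊆ O`, so `O^×` contains the kernel of `𝓞_K^× → (𝓞_K/m𝓞_K)^×` and has finite index.
-/

section AbelianGroups

theorem mem_torsion_of_nsmul_mem {A : Type*} [AddCommGroup A] {n : ℕ} (hn : n ≠ 0) {x : A}
    (hx : n • x ∈ Submodule.torsion ℤ A) : x ∈ Submodule.torsion ℤ A := by
  rw [← Submodule.Quotient.mk_eq_zero] at hx ⊢
  rw [← natCast_zsmul, Submodule.Quotient.mk_smul] at hx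
  exact (smul_eq_zero_iff_right (Int.natCast_ne_zero.mpr hn)).mp hx

variable {A : Type*} [AddCommGroup A] [Module.Finite ℤ A] {n : ℕ}

theorem finrank_eq_of_injective_of_finiteIndex_range {B : Type*} [AddCommGroup B] {f : B →+ A}
    (hf : Function.Injective f) [f.range.FiniteIndex] :
    Module.finrank ℤ B = Module.finrank ℤ A := by
  let N : Submodule ℤ A := LinearMap.range f.toIntLinearMap
  have : Finite (A ⧸ N) := f.range.finite_quotient_of_finiteIndex
  have quotient_torsion : Module.IsTorsion ℤ (A ⧸ N) :=
    isAddTorsion_iff_isTorsion_int.mp isAddTorsion_of_finite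
  calc
    _ = Module.finrank ℤ N := (LinearMap.finrank_range_of_inj (f := f.toIntLinearMap) hf).symm
    _ = Module.finrank ℤ A := by
      rw [← N.finrank_quotient_add_finrank,
        Module.finrank_eq_zero_iff_isTorsion.mpr quotient_torsion, zero_add]

theorem relIndex_range_nsmul_torsion (hn : n ≠ 0) :
    (nsmulAddMonoidHom n : A →+ A).range.relIndex (Submodule.torsion ℤ A).toAddSubgroup =
      Nat.card (nsmulAddMonoidHom n : A →+ A).ker := by
  set T := Submodule.torsion ℤ A
  have : Finite T := Module.finite_of_fg_torsion T Submodule.torsion_isTorsion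
  have range_inter : (nsmulAddMonoidHom n : A →+ A).range.addSubgroupOf T.toAddSubgroup =
      (nsmulAddMonoidHom n : T →+ T).range := by
    ext y
    constructor
    · rintro ⟨x, hx⟩
      exact ⟨⟨x, mem_torsion_of_nsmul_mem hn (Set.mem_of_eq_of_mem hx y.2)⟩, Subtype.ext hx⟩
    · rintro ⟨t, rfl⟩
      exact ⟨t, rfl⟩
  have card_ker : Nat.card (nsmulAddMonoidHom n : T →+ T).ker =
      Nat.card (nsmulAddMonoidHom n : A →+ A).ker := by
    have map_ker : (nsmulAddMonoidHom n : T →+ T).ker.map T.toAddSubgroup.subtype =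
        (nsmulAddMonoidHom n : A →+ A).ker := by
      ext x
      constructor
      · rintro ⟨t, ht, rfl⟩
        exact congrArg Subtype.val ht
      · intro hx
        have hxT : x ∈ T := mem_torsion_of_nsmul_mem hn (Set.mem_of_eq_of_mem hx T.zero_mem)
        exact ⟨⟨x, hxT⟩, Subtype.ext hx, rfl⟩
    rw [← map_ker]
    exact (AddSubgroup.card_map_of_injective T.toAddSubgroup.subtype_injective).symm
  rw [AddSubgroup.relIndex, range_inter, ← card_ker]
  exact AddSubgroup.index_range

theorem index_range_nsmul_sup_torsion :
    ((nsmulAddMonoidHom n : A →+ A).range ⊔ (Submodule.torsion ℤ A).toAddSubgroup).index =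
      n ^ Module.finrank ℤ A := by
  set T := Submodule.torsion ℤ A
  let π : A →+ A ⧸ T := T.mkQ.toAddMonoidHom
  have π_surjective : Function.Surjective π := T.mkQ_surjective
  have ker_π : π.ker = T.toAddSubgroup := QuotientAddGroup.ker_mk' T.toAddSubgroup
  have map_range : (nsmulAddMonoidHom n : A →+ A).range.map π =
      (nsmulAddMonoidHom n : A ⧸ T →+ A ⧸ T).range := by
    have comm : π.comp (nsmulAddMonoidHom n) = (nsmulAddMonoidHom n).comp π := by
      ext x
      exact map_nsmul π n x
    rw [AddMonoidHom.map_range, comm, AddMonoidHom.range_comp,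
      AddMonoidHom.range_eq_top.mpr π_surjective, AddMonoidHom.range_eq_map]
  calc
    _ = ((nsmulAddMonoidHom n : A →+ A).range.map π).index := by
      rw [AddSubgroup.index_map, ker_π, AddMonoidHom.range_eq_top.mpr π_surjective,
        AddSubgroup.index_top, mul_one]
    _ = n ^ Module.finrank ℤ (A ⧸ T) := by rw [map_range, AddSubgroup.index_range_nsmul]
    _ = n ^ Module.finrank ℤ A := by rw [finrank_quotient_eq_of_le_torsion le_rfl]

theorem index_range_nsmul_eq_card_ker_mul (hn : n ≠ 0) :
    (nsmulAddMonoidHom n : A →+ A).range.index =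
      Nat.card (nsmulAddMonoidHom n : A →+ A).ker * n ^ Module.finrank ℤ A := by
  rw [← relIndex_range_nsmul_torsion hn, ← index_range_nsmul_sup_torsion,
    ← AddSubgroup.relIndex_sup_right, sup_comm, AddSubgroup.relIndex_mul_index le_sup_left]

end AbelianGroups

theorem index_range_pow_units {R : Type*} [CommRing R] [IsDomain R] [Module.Finite ℤ (Additive Rˣ)]
    {ζ : R} {n : ℕ} [NeZero n] (hζ : IsPrimitiveRoot ζ n) :
    (powMonoidHom n : Rˣ →* Rˣ).range.index = n ^ (Module.finrank ℤ (Additive Rˣ) + 1) := by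
  have card_ker : Nat.card (powMonoidHom n : Rˣ →* Rˣ).ker = n := hζ.card_rootsOfUnity
  calc
    _ = Nat.card (powMonoidHom n : Rˣ →* Rˣ).ker * n ^ Module.finrank ℤ (Additive Rˣ) :=
      index_range_nsmul_eq_card_ker_mul (A := Additive Rˣ) (NeZero.ne n)
    _ = n ^ (Module.finrank ℤ (Additive Rˣ) + 1) := by rw [card_ker, pow_succ']

section FiniteIndex

variable {R S : Type*} [CommRing R] [CommRing S] {f : R →+* S}

theorem finiteIndex_range_unitsMap_of_ideal_le (hf : Function.Injective f)
    (I : Ideal S) [Finite (S ⧸ I)] (hI : ∀ x ∈ I, x ∈ f.range) :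
    (Units.map (f : R →* S)).range.FiniteIndex := by
  have lift_of_mk_eq_one {s : S} (hs : Ideal.Quotient.mk I s = 1) : ∃ r, f r = s := by
    obtain ⟨r, hr⟩ := hI (s - 1) (Ideal.Quotient.eq.mp hs)
    exact ⟨r + 1, by rw [map_add, hr, map_one, sub_add_cancel]⟩
  let reduction : Sˣ →* (S ⧸ I)ˣ := Units.map (Ideal.Quotient.mk I : S →* S ⧸ I)
  have ker_le : reduction.ker ≤ (Units.map (f : R →* S)).range := by
    intro u hu
    have inv_mem_ker : u⁻¹ ∈ reduction.ker := inv_mem hu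
    obtain ⟨x, hx⟩ := lift_of_mk_eq_one (congrArg Units.val hu)
    obtain ⟨y, hy⟩ := lift_of_mk_eq_one (congrArg Units.val inv_mem_ker)
    have hxy : x * y = 1 := hf (by rw [map_mul, hx, hy, map_one, Units.mul_inv])
    exact ⟨.mkOfMulEqOne x y hxy, Units.ext hx⟩
  exact Subgroup.finiteIndex_of_le ker_le

theorem finiteIndex_range_unitsMap [Module.Finite ℤ S] (hf : Function.Injective f)
    [f.range.toAddSubgroup.FiniteIndex] : (Units.map (f : R →* S)).range.FiniteIndex := by
  set H := f.range.toAddSubgroup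
  let I : Ideal S := Ideal.span {(H.index : S)}
  have I_eq : I.toAddSubgroup = (nsmulAddMonoidHom H.index : S →+ S).range := by
    ext x
    simp [I, Ideal.mem_span_singleton, dvd_def, eq_comm]
  have : AddGroup.FG S := Module.Finite.iff_addGroup_fg.mp inferInstance
  have : I.toAddSubgroup.FiniteIndex :=
    I_eq ▸ AddSubgroup.finiteIndex_range_nsmulAddMonoidHom_of_fg S H.index_ne_zero_of_finite
  have : Finite (S ⧸ I) := I.toAddSubgroup.finite_quotient_of_finiteIndex
  refine finiteIndex_range_unitsMap_of_ideal_le hf I fun x hx => ?_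
  obtain ⟨s, rfl⟩ : x ∈ (nsmulAddMonoidHom H.index : S →+ S).range := I_eq ▸ hx
  exact H.nsmul_index_mem s

theorem moduleFinite_units_of_injective [Module.Finite ℤ (Additive Sˣ)]
    (hf : Function.Injective f) :
    Module.Finite ℤ (Additive Rˣ) :=
  Module.Finite.of_injective (Units.map (f : R →* S)).toAdditive.toIntLinearMap
    (Units.map_injective (f := (f : R →* S)) hf)

theorem finrank_units_eq_of_finiteIndex_range [Module.Finite ℤ S] [Module.Finite ℤ (Additive Sˣ)]
    (hf : Function.Injective f) [f.range.toAddSubgroup.FiniteIndex] :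
    Module.finrank ℤ (Additive Rˣ) = Module.finrank ℤ (Additive Sˣ) := by
  have := finiteIndex_range_unitsMap hf
  have : (Units.map (f : R →* S)).toAdditive.range.FiniteIndex :=
    AddSubgroup.finiteIndex_iff_finite_quotient.mpr
      (Units.map (f : R →* S)).range.finite_quotient_of_finiteIndex
  exact finrank_eq_of_injective_of_finiteIndex_range (f := (Units.map (f : R →* S)).toAdditive)
    (Units.map_injective (f := (f : R →* S)) hf)

end FiniteIndex

theorem card_range_eq_index_ker {G M : Type*} [Group G] [Monoid M] (f : G →* M) :
    Nat.card (Set.range f) = f.ker.index := by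
  have leftRel_eq : QuotientGroup.leftRel f.ker = Setoid.ker f := by
    ext x y
    rw [QuotientGroup.leftRel_apply, Setoid.ker_def, eq_comm, f.eq_iff]
  rw [Subgroup.index, ← Nat.card_congr (Setoid.quotientKerEquivRange f), ← leftRel_eq]
  rfl

section Orders

variable (L : Type*) [Field L] (R : Type*) [CommRing R] [Algebra R L] [IsFractionRing R L]
  [Module.Finite ℤ R]

/-- The inclusion of an order `R` of a number field `L` into the maximal order `𝓞 L`. The order is
given abstractly, as a ring finite over `ℤ` with fraction field `L`. -/
noncomputable def orderToRingOfIntegers : R →+* 𝓞 L :=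
  (IsIntegralClosure.lift ℤ (𝓞 L) L : R →ₐ[ℤ] 𝓞 L)

theorem orderToRingOfIntegers_injective : Function.Injective (orderToRingOfIntegers L R) := by
  refine Function.Injective.of_comp (f := algebraMap (𝓞 L) L) ?_
  convert IsFractionRing.injective R L using 1
  ext x
  exact IsIntegralClosure.algebraMap_lift ℤ (𝓞 L) L x

variable [NumberField L]

instance orderToRingOfIntegers_range_finiteIndex :
    (orderToRingOfIntegers L R).range.toAddSubgroup.FiniteIndex := by
  let i : R →ₗ[ℤ] 𝓞 L := (orderToRingOfIntegers L R).toIntAlgHom.toLinearMap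
  have finrank_eq : Module.finrank ℤ (LinearMap.range i) = Module.finrank ℤ (𝓞 L) := by
    rw [LinearMap.finrank_range_of_inj (orderToRingOfIntegers_injective L R), RingOfIntegers.rank,
      IsFractionRing.finrank_eq ℤ ℚ R L]
  have : Finite (𝓞 L ⧸ LinearMap.range i) := Submodule.finiteQuotientOfFreeOfRankEq _ finrank_eq
  exact AddSubgroup.finiteIndex_iff_finite_quotient.mpr this

theorem finrank_units_order : Module.finrank ℤ (Additive Rˣ) = Units.rank L := by
  rw [finrank_units_eq_of_finiteIndex_range (orderToRingOfIntegers_injective L R), Units.finrank_eq]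

theorem units_rank_add_one :
    Units.rank L + 1 = Nat.card {w : InfinitePlace L // w.IsReal} +
      Nat.card {w : InfinitePlace L // w.IsComplex} := by
  classical
  rw [Units.rank, Nat.sub_add_cancel Fintype.card_pos,
    InfinitePlace.card_eq_nrRealPlaces_add_nrComplexPlaces, Nat.card_eq_fintype_card,
    Nat.card_eq_fintype_card]

theorem index_range_sq_units_order :
    (powMonoidHom 2 : Rˣ →* Rˣ).range.index =
      2 ^ (Nat.card {w : InfinitePlace L // w.IsReal} +
        Nat.card {w : InfinitePlace L // w.IsComplex}) := by
  have : Module.Finite ℤ (Additive Rˣ) :=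
    moduleFinite_units_of_injective (orderToRingOfIntegers_injective L R)
  have : IsDomain R := (IsFractionRing.injective R L).isDomain
  have : CharZero R := (algebraMap R L).charZero
  have neg_one_primitive : IsPrimitiveRoot (-1 : R) 2 := .neg_one 0 two_ne_zero.symm
  rw [index_range_pow_units neg_one_primitive, finrank_units_order L R, units_rank_add_one]

end Orders

section Signs

theorem real_sign_eq_one_iff {x : ℝ} : Real.sign x = 1 ↔ 0 < x := by
  rcases lt_trichotomy x 0 with hx | rfl | hx
  · norm_num [Real.sign_of_neg hx, hx.le]
  · norm_num
  · simp only [Real.sign_of_pos hx, hx]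

theorem real_sign_mul (x y : ℝ) : Real.sign (x * y) = Real.sign x * Real.sign y := by
  rcases lt_trichotomy x 0 with hx | rfl | hx <;> rcases lt_trichotomy y 0 with hy | rfl | hy <;>
    simp [Real.sign_of_neg, Real.sign_of_pos, mul_pos_of_neg_of_neg, mul_neg_of_neg_of_pos,
      mul_neg_of_pos_of_neg, *]

variable (F : Type) [Field F] (R : Subring F)

/-- The homomorphism `sgn` sending a unit of a subring `R` of `F` to its signs under the real
embeddings of `F`, with the signs `±1` encoded as real numbers. -/
noncomputable def unitsSign : Rˣ →* ((F →+* ℝ) → ℝ) where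
  toFun u φ := Real.sign (φ (algebraMap R F (u : R)))
  map_one' := by
    ext φ
    simp only [Units.val_one, map_one, Real.sign_one, Pi.one_apply]
  map_mul' u v := by
    ext φ
    simp only [Units.val_mul, map_mul, real_sign_mul, Pi.mul_apply]

theorem ker_unitsSign : (unitsSign F R).ker = totPosUnitsOrd F R := by
  ext u
  exact funext_iff.trans (forall_congr' fun _ => real_sign_eq_one_iff)

theorem range_sq_le_totPosUnitsOrd : (powMonoidHom 2 : Rˣ →* Rˣ).range ≤ totPosUnitsOrd F R := by
  rintro _ ⟨u, rfl⟩ φ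
  have image_ne_zero : φ (algebraMap R F u) ≠ 0 := (u.isUnit.map (φ.comp (algebraMap R F))).ne_zero
  rw [powMonoidHom_apply, Units.val_pow_eq_pow_val, map_pow, map_pow]
  exact sq_pos_of_ne_zero image_ne_zero

end Signs

theorem card_totPos_mod_squares_mul_card_sgn_image_general (r1 r2 : ℕ)
    (hr1 : Nat.card {w : InfinitePlace K // w.IsReal} = r1)
    (hr2 : Nat.card {w : InfinitePlace K // w.IsComplex} = r2)
    [Module.Finite ℤ O] :
    Nat.card (totPosUnitsOrd K O ⧸ Subgroup.comap (totPosUnitsOrd K O).subtype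
        (powMonoidHom 2 : Oˣ →* Oˣ).range) *
      Nat.card ↥(Set.range fun u : Oˣ => fun φ : K →+* ℝ =>
        Real.sign (φ (algebraMap O K (u : O)))) = 2 ^ (r1 + r2) := by
  calc
    _ = (powMonoidHom 2 : Oˣ →* Oˣ).range.relIndex (totPosUnitsOrd K O) *
        (totPosUnitsOrd K O).index := by
      rw [← ker_unitsSign, ← card_range_eq_index_ker]
      rfl
    _ = (powMonoidHom 2 : Oˣ →* Oˣ).range.index :=
      Subgroup.relIndex_mul_index (range_sq_le_totPosUnitsOrd K O)
    _ = 2 ^ (r1 + r2) := by rw [index_range_sq_units_order K O, hr1, hr2]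

/-- **Totally positive units, squares, and the image of the sign map.**
For an order `O` in a number field `K` with `r1 ≥ 1` real places and `r2` complex places,
`#(O^×_{≫0}/(O^×)²) · #(Image sgn) = 2^(r1+r2)`, where `sgn` sends a unit of `O` to the
tuple of signs of its images under all real embeddings of `K`. -/
theorem card_totPos_mod_squares_mul_card_sgn_image (r1 r2 : ℕ) (hr1pos : 1 ≤ r1)
    (hr1 : Nat.card {w : InfinitePlace K // w.IsReal} = r1)
    (hr2 : Nat.card {w : InfinitePlace K // w.IsComplex} = r2)
    [Module.Finite ℤ O] :
    Nat.card (totPosUnitsOrd K O ⧸ Subgroup.comap (totPosUnitsOrd K O).subtype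
        (powMonoidHom 2 : Oˣ →* Oˣ).range) *
      Nat.card ↥(Set.range fun u : Oˣ => fun φ : K →+* ℝ =>
        Real.sign (φ (algebraMap O K (u : O)))) = 2 ^ (r1 + r2) :=
  card_totPos_mod_squares_mul_card_sgn_image_general K O r1 r2 hr1 hr2
end

section
/- Let r1 ≥ 1 and r2 ≥ 0 be integers and let R := ℝ^{r1} × ℂ^{r2}, viewed as a finite-dimensional commutative ℝ-algebra (componentwise operations), with N : R → ℝ the ℝ-algebra norm. Let P be the subgroup of R^× consisting of units u with N(u) > 0, and let Q := {u² : u ∈ R^×} be the subgroup of squares of units (note Q ⊆ P). Then the quotient group P/Q has exactly 2^{r1−1} elements. -/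
/-- The ℝ-algebra `ℝ^(r1) × ℂ^(r2)` (componentwise operations). -/
abbrev RCAlg (r1 r2 : ℕ) : Type := (Fin r1 → ℝ) × (Fin r2 → ℂ)

/-- The subgroup `P` of units of `ℝ^(r1) × ℂ^(r2)` of positive algebra norm. -/
noncomputable def posNormUnits (r1 r2 : ℕ) : Subgroup (RCAlg r1 r2)ˣ where
  carrier := {u | 0 < Algebra.norm ℝ (u : RCAlg r1 r2)}
  one_mem' := by
    simp only [Set.mem_setOf_eq, Units.val_one, _root_.map_one]
    exact one_pos
  mul_mem' := by
    intro a b ha hb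
    simp only [Set.mem_setOf_eq, Units.val_mul, _root_.map_mul] at *
    exact mul_pos ha hb
  inv_mem' := by
    intro a ha
    simp only [Set.mem_setOf_eq] at *
    have h1 : Algebra.norm ℝ ((a : (RCAlg r1 r2)ˣ) : RCAlg r1 r2) *
        Algebra.norm ℝ ((a⁻¹ : (RCAlg r1 r2)ˣ) : RCAlg r1 r2) = 1 := by
      rw [← _root_.map_mul, ← Units.val_mul, mul_inv_cancel, Units.val_one, _root_.map_one]
    have h2 : Algebra.norm ℝ ((a⁻¹ : (RCAlg r1 r2)ˣ) : RCAlg r1 r2) =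
        (Algebra.norm ℝ ((a : (RCAlg r1 r2)ˣ) : RCAlg r1 r2))⁻¹ :=
      eq_inv_of_mul_eq_one_right h1
    rw [h2]
    exact inv_pos.mpr ha

/-!
Let `A = R^ι × B`, where nonnegative elements of the ordered ring `R` and all units of `B` are
squares, as for `R = ℝ` and `B = ℂ^r2`; let `P` and `Q` be the units of `A` of positive norm and
the squares of units.  Then `[P : Q] = [A^× : Q] / [A^× : P]`.  The index of the squares is
multiplicative over products of rings, and it is `2` for `R` and `1` for `B`, so
`[A^× : Q] = 2 ^ |ι|`.  As `ι` is nonempty, the norm maps `A^×` onto `R^×`, so `[A^× : P] = 2`, and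
every subgroup of index `2` contains the squares.
-/

section Norm

variable {R A B ι : Type*} [CommRing R] [Ring A] [Algebra R A] [Module.Free R A] [Module.Finite R A]

theorem algebraNorm_prod [Ring B] [Algebra R B] [Module.Free R B] [Module.Finite R B]
    (x : A × B) : Algebra.norm R x = Algebra.norm R x.1 * Algebra.norm R x.2 :=
  LinearMap.det_prodMap (LinearMap.mul R A x.1) (LinearMap.mul R B x.2)

theorem algebraNorm_pi [Fintype ι] (x : ι → A) :
    Algebra.norm R x = ∏ i, Algebra.norm R (x i) :=
  LinearMap.det_pi fun i ↦ LinearMap.mul R A (x i)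

theorem surjective_unitsMap_algebraNorm_pi_prod [Ring B] [Algebra R B] [Module.Free R B]
    [Module.Finite R B] [Finite ι] [Nonempty ι] :
    Function.Surjective (Units.map (Algebra.norm R : (ι → R) × B →* R)) := by
  classical
  cases nonempty_fintype ι
  intro t
  obtain ⟨i⟩ := ‹Nonempty ι›
  refine ⟨MulEquiv.prodUnits.symm (MulEquiv.piUnits.symm (Pi.mulSingle i t), 1), Units.ext ?_⟩
  calc Algebra.norm R ((fun j ↦ ((Pi.mulSingle i t : ι → Rˣ) j : R), 1) : (ι → R) × B)
    _ = ∏ j, ((Pi.mulSingle i t : ι → Rˣ) j : R) := by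
      simp only [algebraNorm_prod, algebraNorm_pi, Algebra.norm_self, MonoidHom.id_apply, map_one,
        mul_one]
    _ = t := by rw [← Units.coe_prod, Fintype.prod_pi_mulSingle']

end Norm

section PosNorm

variable (R A : Type*) [CommRing R] [LinearOrder R] [IsStrictOrderedRing R] [Ring A] [Algebra R A]

/-- The group of units of positive norm in an algebra `A` over an ordered ring `R`, extending
`posNormUnits` to other algebras.  As a preimage of `Units.posSubgroup R`, it inherits its index
when the norm is surjective on units. -/
noncomputable def unitsPosNorm : Subgroup Aˣ :=
  (Units.posSubgroup R).comap (Units.map (Algebra.norm R))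

variable {R A} in
theorem index_unitsPosNorm
    (hnorm : Function.Surjective (Units.map (Algebra.norm R : A →* R))) :
    (unitsPosNorm R A).index = 2 := by
  rw [unitsPosNorm, Subgroup.index_comap_of_surjective _ hnorm, Units.index_posSubgroup]

end PosNorm

section PowerIndex

theorem index_range_powMonoidHom_congr {G H : Type*} [CommGroup G] [CommGroup H] (e : G ≃* H)
    (n : ℕ) : (powMonoidHom n : G →* G).range.index = (powMonoidHom n : H →* H).range.index := by
  rw [← MulEquiv.map_range_powMonoidHom e n, Subgroup.index_map_equiv]

theorem index_range_powMonoidHom_prod (G H : Type*) [CommGroup G] [CommGroup H] (n : ℕ) :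
    (powMonoidHom n : G × H →* G × H).range.index =
      (powMonoidHom n : G →* G).range.index * (powMonoidHom n : H →* H).range.index := by
  rw [← Subgroup.index_prod, ← MonoidHom.range_prodMap]
  rfl

theorem index_range_powMonoidHom_pi {ι : Type*} [Fintype ι] (G : ι → Type*)
    [∀ i, CommGroup (G i)] (n : ℕ) :
    (powMonoidHom n : (∀ i, G i) →* ∀ i, G i).range.index =
      ∏ i, (powMonoidHom n : G i →* G i).range.index := by
  simp only [Subgroup.index_eq_card, ← Nat.card_pi]
  exact Nat.card_congr (QuotientGroup.mulEquivPiModRangePowMonoidHom G n).toEquiv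

end PowerIndex

section UnitSquares

theorem isSquare_units_iff {M : Type*} [CommMonoid M] {u : Mˣ} :
    IsSquare u ↔ IsSquare (u : M) := by
  refine ⟨fun h ↦ h.map (Units.coeHom M), fun ⟨x, hx⟩ ↦ ?_⟩
  have x_isUnit : IsUnit x := isUnit_of_mul_isUnit_left (hx ▸ u.isUnit)
  exact ⟨x_isUnit.unit, Units.ext hx⟩

theorem mem_range_powMonoidHom_two {G : Type*} [CommGroup G] {g : G} :
    g ∈ (powMonoidHom 2 : G →* G).range ↔ IsSquare g := by
  simp only [MonoidHom.mem_range, powMonoidHom_apply, isSquare_iff_exists_sq, eq_comm]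

theorem range_powMonoidHom_two_units {R : Type*} [CommRing R] [LinearOrder R]
    [IsStrictOrderedRing R] (hR : ∀ x : R, 0 ≤ x → IsSquare x) :
    (powMonoidHom 2 : Rˣ →* Rˣ).range = Units.posSubgroup R := by
  ext u
  rw [mem_range_powMonoidHom_two, isSquare_units_iff, Units.mem_posSubgroup]
  exact ⟨fun h ↦ h.nonneg.lt_of_ne' u.ne_zero, fun h ↦ hR _ h.le⟩

theorem isSquare_pi {ι : Type*} {M : ι → Type*} [∀ i, Mul (M i)] {x : ∀ i, M i}
    (hx : ∀ i, IsSquare (x i)) : IsSquare x := by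
  choose y hy using hx
  exact ⟨y, funext hy⟩

theorem index_range_powMonoidHom_two_units_pi_prod {ι R B : Type*} [Fintype ι] [CommRing R]
    [LinearOrder R] [IsStrictOrderedRing R] [CommMonoid B] (hR : ∀ x : R, 0 ≤ x → IsSquare x)
    (hB : ∀ b : Bˣ, IsSquare b) :
    (powMonoidHom 2 : ((ι → R) × B)ˣ →* ((ι → R) × B)ˣ).range.index = 2 ^ Fintype.card ι := by
  have index_B : (powMonoidHom 2 : Bˣ →* Bˣ).range.index = 1 :=
    Subgroup.index_eq_one.2 (eq_top_iff.2 fun b _ ↦ mem_range_powMonoidHom_two.2 (hB b))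
  have index_R : (powMonoidHom 2 : Rˣ →* Rˣ).range.index = 2 := by
    rw [range_powMonoidHom_two_units hR, Units.index_posSubgroup]
  rw [index_range_powMonoidHom_congr MulEquiv.prodUnits, index_range_powMonoidHom_prod, index_B,
    mul_one, index_range_powMonoidHom_congr MulEquiv.piUnits, index_range_powMonoidHom_pi]
  simp only [index_R, Finset.prod_const, Finset.card_univ]

end UnitSquares

theorem posNormUnits_eq_unitsPosNorm (r1 r2 : ℕ) :
    posNormUnits r1 r2 = unitsPosNorm ℝ (RCAlg r1 r2) :=
  rfl

theorem card_posNormUnits_mod_squares_general {ι R B : Type*} [Fintype ι] [Nonempty ι] [CommRing R]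
    [LinearOrder R] [IsStrictOrderedRing R] [CommRing B] [Algebra R B] [Module.Free R B]
    [Module.Finite R B] (hR : ∀ x : R, 0 ≤ x → IsSquare x) (hB : ∀ b : Bˣ, IsSquare b) :
    Nat.card (unitsPosNorm R ((ι → R) × B) ⧸
      Subgroup.comap (unitsPosNorm R ((ι → R) × B)).subtype
        (powMonoidHom 2 : ((ι → R) × B)ˣ →* ((ι → R) × B)ˣ).range) =
      2 ^ (Fintype.card ι - 1) := by
  set P := unitsPosNorm R ((ι → R) × B)
  set Q := (powMonoidHom 2 : ((ι → R) × B)ˣ →* ((ι → R) × B)ˣ).range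
  have index_P : P.index = 2 := index_unitsPosNorm surjective_unitsMap_algebraNorm_pi_prod
  have index_Q : Q.index = 2 ^ Fintype.card ι := index_range_powMonoidHom_two_units_pi_prod hR hB
  have Q_le_P : Q ≤ P := by
    rintro _ ⟨u, rfl⟩
    exact Subgroup.sq_mem_of_index_two index_P u
  have relIndex_mul_two : Q.relIndex P * 2 = 2 ^ (Fintype.card ι - 1) * 2 := by
    rw [← index_P, Subgroup.relIndex_mul_index Q_le_P, index_Q, index_P,
      pow_sub_one_mul Fintype.card_ne_zero]
  exact Nat.eq_of_mul_eq_mul_right two_pos relIndex_mul_two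

/-- **Positive-norm units modulo squares in `ℝ^(r1) × ℂ^(r2)`.**
The quotient of the group `P` of positive-norm units of `R = ℝ^(r1) × ℂ^(r2)` by the
subgroup `Q = {u² : u ∈ R^×}` of squares of units has exactly `2^(r1-1)` elements
(for `r1 ≥ 1`). -/
theorem card_posNormUnits_mod_squares (r1 r2 : ℕ) (hr1 : 1 ≤ r1) :
    Nat.card (posNormUnits r1 r2 ⧸ Subgroup.comap (posNormUnits r1 r2).subtype
        (powMonoidHom 2 : (RCAlg r1 r2)ˣ →* (RCAlg r1 r2)ˣ).range) = 2 ^ (r1 - 1) := by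
  have : Nonempty (Fin r1) := ⟨⟨0, hr1⟩⟩
  have isSquare_real (x : ℝ) (hx : 0 ≤ x) : IsSquare x := Real.isSquare_iff.2 hx
  have isSquare_units_complex (z : (Fin r2 → ℂ)ˣ) : IsSquare z :=
    isSquare_units_iff.2 (isSquare_pi fun _ ↦ Complex.isSquare _)
  rw [posNormUnits_eq_unitsPosNorm,
    card_posNormUnits_mod_squares_general isSquare_real isSquare_units_complex, Fintype.card_fin]
end
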